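/- Let K be a natural number, a ∈ ℝ, and c, w, b, c_p ∈ ℝ^K. Define û(x) = Σ_{k=1}^K c_k tanh(w_k x + b_k), p̂(x) = Σ_{k=1}^K c_{p,k} tanh(w_k x + b_k), and the transformed PDE loss L̃_F(c, w, b, c_p) = (1/(2π)) ∫₀^{2π} [ (p̂′(x) + a² sin(a x))² + (p̂(x) − û′(x))² ] dx. Then for every index k, the partial derivative of L̃_F with respect to c_{p,k} satisfies |∂L̃_F/∂c_{p,k}| ≤ 4 (Σ_{j=1}^K |c_{p,j}| + Σ_{j=1}^K max(|c_j|, |c_{p,j}|) |w_j| + a²) · max(|w_k|, 1). -/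

import Mathlib

/-!
Along the line `t ↦ Function.update cp k t` both residuals are affine in `t`: with
`s = t - cp k` they are `A + s S` and `B + s T`, where `A`, `B` are the residuals at `cp`,
`S(x) = w_k (1 - tanh² (w_k x + b_k))` and `T(x) = tanh (w_k x + b_k)`. The loss is therefore a
quadratic polynomial in `s`, and its derivative at `s = 0` is the mean of `2 (A S + B T)` over
`[0, 2π]`; no differentiation under the integral sign is needed. Since `|tanh| ≤ 1` and
`0 ≤ 1 - tanh² ≤ 1`, one has `|S|, |T| ≤ max |w_k| 1`, `|A| ≤ ∑ |cp_j| |w_j| + a²` and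
`|B| ≤ ∑ |cp_j| + ∑ |c_j| |w_j|`, which bounds the integrand pointwise by the right-hand side.
-/

lemma hasDerivAt_tanh_aux (x : ℝ) : HasDerivAt Real.tanh (1 - Real.tanh x ^ 2) x := by
  have hc := (Real.cosh_pos x).ne'
  have h := (Real.hasDerivAt_sinh x).div (Real.hasDerivAt_cosh x) hc
  have e : Real.tanh = Real.sinh / Real.cosh := by
    funext y
    simp [Real.tanh_eq_sinh_div_cosh]
  rw [e]
  refine h.congr_deriv ?_
  simp only [Pi.div_apply]
  field_simp

lemma continuous_tanh_aux : Continuous Real.tanh :=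
  continuous_iff_continuousAt.2 fun x => (hasDerivAt_tanh_aux x).continuousAt

lemma deriv_network {K : ℕ} (c w b : Fin K → ℝ) (x : ℝ) :
    deriv (fun y => ∑ k, c k * Real.tanh (w k * y + b k)) x =
      ∑ k, c k * (w k * (1 - Real.tanh (w k * x + b k) ^ 2)) := by
  refine HasDerivAt.deriv (HasDerivAt.fun_sum fun k _ => HasDerivAt.const_mul (c k) ?_)
  have h1 : HasDerivAt (fun y => w k * y + b k) (w k) x := by
    simpa using ((hasDerivAt_id x).const_mul (w k)).add_const (b k)
  have h2 := (hasDerivAt_tanh_aux (w k * x + b k)).comp x h1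
  rw [mul_comm]
  exact h2

lemma sum_update_mul {K : ℕ} (p f : Fin K → ℝ) (k : Fin K) (t : ℝ) :
    ∑ j, Function.update p k t j * f j = ∑ j, p j * f j + (t - p k) * f k := by
  have h : ∀ j, Function.update p k t j * f j =
      p j * f j + if j = k then (t - p k) * f k else 0 := by
    intro j
    by_cases hj : j = k
    · subst hj
      simp
      ring
    · simp [hj]
  simp [h, Finset.sum_add_distrib]

/-- The derivative at `t₀` of a mean of squares of two residuals that are affine in `t`,
bounded by any pointwise bound of the integrand's first-order coefficient. -/
lemma abs_deriv_mean_le {A S B T : ℝ → ℝ} (hA : Continuous A) (hS : Continuous S)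
    (hB : Continuous B) (hT : Continuous T) (t₀ C : ℝ)
    (hC : ∀ x, |2 * (A x * S x + B x * T x)| ≤ C) :
    |deriv (fun t => (1 / (2 * Real.pi)) * ∫ x in (0:ℝ)..(2 * Real.pi),
      ((A x + (t - t₀) * S x) ^ 2 + (B x + (t - t₀) * T x) ^ 2)) t₀| ≤ C := by
  have hpi : 0 < 2 * Real.pi := Real.two_pi_pos
  set I0 := ∫ x in (0:ℝ)..(2 * Real.pi), (A x ^ 2 + B x ^ 2)
  set I1 := ∫ x in (0:ℝ)..(2 * Real.pi), 2 * (A x * S x + B x * T x) with hI1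
  set I2 := ∫ x in (0:ℝ)..(2 * Real.pi), (S x ^ 2 + T x ^ 2)
  have hexp : ∀ t : ℝ, ∫ x in (0:ℝ)..(2 * Real.pi),
      ((A x + (t - t₀) * S x) ^ 2 + (B x + (t - t₀) * T x) ^ 2) =
        I0 + (t - t₀) * I1 + (t - t₀) ^ 2 * I2 := by
    intro t
    rw [← intervalIntegral.integral_const_mul, ← intervalIntegral.integral_const_mul,
      ← intervalIntegral.integral_add, ← intervalIntegral.integral_add]
    · congr 1
      funext x
      ring
    all_goals
      apply Continuous.intervalIntegrable
      fun_prop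
  have hd : HasDerivAt (fun t => (1 / (2 * Real.pi)) *
      (I0 + (t - t₀) * I1 + (t - t₀) ^ 2 * I2)) (1 / (2 * Real.pi) * I1) t₀ := by
    have h1 : HasDerivAt (fun t => t - t₀) 1 t₀ := (hasDerivAt_id t₀).sub_const t₀
    have h2 := (((h1.mul_const I1).const_add I0).add ((h1.pow 2).mul_const I2)).const_mul
      (1 / (2 * Real.pi))
    exact h2.congr_deriv (by simp)
  simp only [hexp]
  rw [hd.deriv, abs_mul, abs_of_pos (by positivity : 0 < 1 / (2 * Real.pi))]
  have hb : |I1| ≤ C * (2 * Real.pi) := by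
    have := intervalIntegral.norm_integral_le_of_norm_le_const (a := 0) (b := 2 * Real.pi)
      (f := fun x => 2 * (A x * S x + B x * T x)) (C := C) (fun x _ => hC x)
    rwa [sub_zero, abs_of_pos hpi, Real.norm_eq_abs] at this
  rw [div_mul_eq_mul_div, one_mul, div_le_iff₀ hpi]
  exact hb

theorem stmt_17 (K : ℕ) (a : ℝ) (c w b cp : Fin K → ℝ)
    (L : (Fin K → ℝ) → (Fin K → ℝ) → (Fin K → ℝ) → (Fin K → ℝ) → ℝ)
    (hL : ∀ c' w' b' cp', L c' w' b' cp' =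
      (1 / (2 * Real.pi)) * ∫ x in (0:ℝ)..(2 * Real.pi),
        ((deriv (fun y => ∑ k, cp' k * Real.tanh (w' k * y + b' k)) x
            + a ^ 2 * Real.sin (a * x)) ^ 2
         + ((∑ k, cp' k * Real.tanh (w' k * x + b' k))
            - deriv (fun y => ∑ k, c' k * Real.tanh (w' k * y + b' k)) x) ^ 2))
    (k : Fin K) :
    |deriv (fun t => L c w b (Function.update cp k t)) (cp k)| ≤
      4 * ((∑ j, |cp j|) + (∑ j, max |c j| |cp j| * |w j|) + a ^ 2) *
        max |w k| 1 := by
  let τ : Fin K → ℝ → ℝ := fun j x => Real.tanh (w j * x + b j)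
  let σ : Fin K → ℝ → ℝ := fun j x => w j * (1 - τ j x ^ 2)
  have hτc : ∀ j, Continuous (τ j) := fun j => continuous_tanh_aux.comp (by fun_prop)
  have hσc : ∀ j, Continuous (σ j) := fun j => by
    have := hτc j
    fun_prop
  have hτ : ∀ j x, |τ j x| ≤ 1 := fun j x => (Real.abs_tanh_lt_one _).le
  have hσ : ∀ j x, |σ j x| ≤ |w j| := by
    intro j x
    have h1 : τ j x ^ 2 ≤ 1 := (Real.tanh_sq_lt_one _).le
    have h2 : |1 - τ j x ^ 2| ≤ 1 := abs_le.2 ⟨by linarith, by linarith [sq_nonneg (τ j x)]⟩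
    calc |σ j x| = |w j| * |1 - τ j x ^ 2| := abs_mul _ _
      _ ≤ |w j| * 1 := by gcongr
      _ = |w j| := mul_one _
  have hfun : (fun t => L c w b (Function.update cp k t)) = fun t =>
      (1 / (2 * Real.pi)) * ∫ x in (0:ℝ)..(2 * Real.pi),
        (((∑ j, cp j * σ j x + a ^ 2 * Real.sin (a * x)) + (t - cp k) * σ k x) ^ 2
          + ((∑ j, cp j * τ j x - ∑ j, c j * σ j x) + (t - cp k) * τ k x) ^ 2) := by
    funext t
    rw [hL]
    congr 2
    funext x
    rw [deriv_network, deriv_network, sum_update_mul cp (fun j => τ j x),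
      sum_update_mul cp (fun j => σ j x)]
    ring
  rw [hfun]
  refine abs_deriv_mean_le (by fun_prop) (hσc k) (by fun_prop) (hτc k) _ _ fun x => ?_
  have hsum : ∀ p f g : Fin K → ℝ, (∀ j, |f j| ≤ g j) →
      |∑ j, p j * f j| ≤ ∑ j, |p j| * g j := by
    intro p f g h
    refine (Finset.abs_sum_le_sum_abs _ _).trans (Finset.sum_le_sum fun j _ => ?_)
    rw [abs_mul]
    exact mul_le_mul_of_nonneg_left (h j) (abs_nonneg _)
  have b1 := hsum cp (fun j => σ j x) (fun j => |w j|) fun j => hσ j x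
  have b2 := hsum c (fun j => σ j x) (fun j => |w j|) fun j => hσ j x
  have b3 := hsum cp (fun j => τ j x) (fun _ => 1) fun j => hτ j x
  simp only [mul_one] at b3
  have m1 : ∑ j, |cp j| * |w j| ≤ ∑ j, max |c j| |cp j| * |w j| :=
    Finset.sum_le_sum fun j _ => by gcongr; exact le_max_right _ _
  have m2 : ∑ j, |c j| * |w j| ≤ ∑ j, max |c j| |cp j| * |w j| :=
    Finset.sum_le_sum fun j _ => by gcongr; exact le_max_left _ _
  have bs : |a ^ 2 * Real.sin (a * x)| ≤ a ^ 2 := by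
    rw [abs_mul, abs_of_nonneg (sq_nonneg a)]
    exact mul_le_of_le_one_right (sq_nonneg a) (Real.abs_sin_le_one _)
  have p0 : 0 ≤ ∑ j, |cp j| := Finset.sum_nonneg fun j _ => abs_nonneg _
  set M := max |w k| 1
  have hM : 0 ≤ M := zero_le_one.trans (le_max_right _ _)
  have hSM : |σ k x| ≤ M := (hσ k x).trans (le_max_left _ _)
  have hTM : |τ k x| ≤ M := (hτ k x).trans (le_max_right _ _)
  set W := ∑ j, max |c j| |cp j| * |w j|
  have hA : |∑ j, cp j * σ j x + a ^ 2 * Real.sin (a * x)| ≤ W + a ^ 2 :=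
    (abs_add_le _ _).trans (by linarith)
  have hB : |∑ j, cp j * τ j x - ∑ j, c j * σ j x| ≤ ∑ j, |cp j| + W :=
    (abs_sub _ _).trans (by linarith)
  have hAS := mul_le_mul hA hSM (abs_nonneg _) ((abs_nonneg _).trans hA)
  have hBT := mul_le_mul hB hTM (abs_nonneg _) ((abs_nonneg _).trans hB)
  rw [← abs_mul] at hAS hBT
  rw [abs_mul, abs_two]
  have hadd := abs_add_le ((∑ j, cp j * σ j x + a ^ 2 * Real.sin (a * x)) * σ k x)
    ((∑ j, cp j * τ j x - ∑ j, c j * σ j x) * τ k x)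
  have q1 := mul_nonneg p0 hM
  have q2 := mul_nonneg (sq_nonneg a) hM
  nlinarith
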